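/- Let D ⊆ 𝒫 be weakly compact and X, Y ∈ L^1_s(D). Then the utility contribution of X to Y equals the one-sided directional derivative of u at Y in direction X: u^c(X;Y) = lim_{ε↓0} ε^{-1}(u(Y + εX) − u(Y)). -/

import Mathlib

open MeasureTheory Filter Set
open scoped ENNReal

variable {Ω : Type*} [MeasurableSpace Ω]

/-- Densities of probability measures absolutely continuous w.r.t. `P`. -/
def Dens (P : Measure Ω) : Set (Ω → ℝ) :=
  {Z | Measurable Z ∧ (∀ ω, 0 ≤ Z ω) ∧ ∫⁻ ω, ENNReal.ofReal (Z ω) ∂P = 1}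

/-- `E_Q[X] = E_Q[X⁺] − E_Q[X⁻]` with the convention `∞ − ∞ = −∞`, where `dQ/dP = Z`. -/
noncomputable def eexp (P : Measure Ω) (Z X : Ω → ℝ) : EReal :=
  if (∫⁻ ω, ENNReal.ofReal (-(Z ω * X ω)) ∂P) = ⊤ then ⊥
  else ((∫⁻ ω, ENNReal.ofReal (Z ω * X ω) ∂P : ℝ≥0∞) : EReal)
    - ((∫⁻ ω, ENNReal.ofReal (-(Z ω * X ω)) ∂P : ℝ≥0∞) : EReal)

/-- Coherent utility function determined by a set of densities `D`. -/
noncomputable def cohU (P : Measure Ω) (D : Set (Ω → ℝ)) (X : Ω → ℝ) : EReal :=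
  ⨅ Z ∈ D, eexp P Z X

/-- The weak `L¹`-space associated with `D`. -/
def Lw (P : Measure Ω) (D : Set (Ω → ℝ)) : Set (Ω → ℝ) :=
  {X | Measurable X ∧ ⊥ < cohU P D X ∧ ⊥ < cohU P D (fun ω => -X ω)}

noncomputable def tailSup (P : Measure Ω) (D : Set (Ω → ℝ)) (X : Ω → ℝ) (n : ℕ) : ℝ≥0∞ :=
  ⨆ Z ∈ D, ∫⁻ ω in {ω | (n : ℝ) < |X ω|}, ENNReal.ofReal (Z ω * |X ω|) ∂P

/-- The strong `L¹`-space associated with `D`. -/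
def Ls (P : Measure Ω) (D : Set (Ω → ℝ)) : Set (Ω → ℝ) :=
  {X | Measurable X ∧ Tendsto (tailSup P D X) atTop (nhds 0)}

/-- Risk-neutral densities for the set `A` of attainable P&Ls. -/
def RiskNeutral (P : Measure Ω) (A : Set (Ω → ℝ)) : Set (Ω → ℝ) :=
  {Z | Z ∈ Dens P ∧ ∀ X ∈ A, eexp P Z X ≤ 0}

/-- `A` is `D`-consistent. -/
def DConsistent (P : Measure Ω) (D A : Set (Ω → ℝ)) : Prop :=
  ∃ A' ⊆ A ∩ Ls P D, D ∩ RiskNeutral P A = D ∩ RiskNeutral P A'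

/-- Sequential compactness of `D` in the weak topology `σ(L¹, L^∞)`. -/
def WSeqCompact (P : Measure Ω) (D : Set (Ω → ℝ)) : Prop :=
  ∀ Z : ℕ → Ω → ℝ, (∀ n, Z n ∈ D) → ∃ W ∈ D, ∃ φ : ℕ → ℕ, StrictMono φ ∧
    ∀ g : Ω → ℝ, Measurable g → (∃ C : ℝ, ∀ ω, |g ω| ≤ C) →
      Tendsto (fun k => ∫ ω, Z (φ k) ω * g ω ∂P) atTop (nhds (∫ ω, W ω * g ω ∂P))

/-- `D` is closed under `L¹`-convergence (within densities). -/
def L1Closed (P : Measure Ω) (D : Set (Ω → ℝ)) : Prop :=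
  ∀ Z : ℕ → Ω → ℝ, (∀ n, Z n ∈ D) → ∀ W ∈ Dens P,
    Tendsto (fun n => ∫ ω, |Z n ω - W ω| ∂P) atTop (nhds 0) → W ∈ D


/-- The set `𝒳_D(Y)` of extreme measures for `Y`:
`Q ∈ D` with `E_Q[Y] = u(Y) ∈ (−∞, ∞)`. -/
def ExtSet (P : Measure Ω) (D : Set (Ω → ℝ)) (Y : Ω → ℝ) : Set (Ω → ℝ) :=
  {Z | Z ∈ D ∧ eexp P Z Y = cohU P D Y ∧ ⊥ < cohU P D Y ∧ cohU P D Y < ⊤}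

/-! Every extreme density `Z` for `Y` gives the upper bound
`u(Y + εX) ≤ u(Y) + ε E_Z[X]`. For the lower bound, fix `c` below the contribution of `X` to `Y`.
The densities with `E_Z[X] ≤ c` form a compact set without extreme densities, so on this set
`E_Z[Y]` stays above `u(Y)` by some `δ > 0`. Since `E_Z[X]` is bounded below on `D`, for small `ε`
these densities cannot push the infimum below `u(Y) + εc`, and the others trivially do not.

Compactness is used only through the set of pairs `(E_Z[Y], E_Z[X])`, `Z ∈ D`. That set is compact
because the strong `L¹` condition is uniform integrability: truncating `X` changes `E_Z[X]` by an
amount that is small uniformly in `Z`, so weak convergence of densities, which is tested against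
bounded functions, extends to the test functions `X` and `Y`. -/

open ProbabilityTheory
open scoped Topology

section DirectionalDerivative

variable {α : Type*} {s : Set α} {f g : α → ℝ}

theorem exists_gt_forall_mem_le_of_isCompact {β : Type*} [TopologicalSpace α] [LinearOrder β]
    [NoMaxOrder β] {h : α → β} {m : β} (hs : IsCompact s) (hh : LowerSemicontinuousOn h s)
    (hm : ∀ x ∈ s, m < h x) : ∃ m' > m, ∀ x ∈ s, m' ≤ h x := by
  rcases s.eq_empty_or_nonempty with rfl | hne
  · simpa using exists_gt m
  · obtain ⟨x, hx, hmin⟩ := hh.exists_isMinOn hne hs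
    exact ⟨h x, hm x hx, fun y hy => hmin hy⟩

theorem eventually_forall_mem_add_mul_le [TopologicalSpace α] {m c : ℝ} (hs : IsCompact s)
    (hf : LowerSemicontinuousOn f s) (hg : LowerSemicontinuousOn g s) (hm : ∀ x ∈ s, m ≤ f x)
    (hc : ∀ x ∈ s, f x = m → c < g x) :
    ∀ᶠ ε : ℝ in 𝓝[>] 0, ∀ x ∈ s, m + ε * c ≤ f x + ε * g x := by
  have hlt : ∀ x ∈ s ∩ g ⁻¹' Iic c, m < f x := fun x hx =>
    (hm x hx.1).lt_of_ne' fun h => (hc x hx.1 h).not_ge hx.2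
  obtain ⟨m', hm', hgap⟩ := exists_gt_forall_mem_le_of_isCompact
    (hg.isCompact_inter_preimage_Iic hs c) (hf.mono inter_subset_left) hlt
  obtain ⟨b, hb⟩ := hg.bddBelow_of_isCompact hs
  have hsmall : ∀ᶠ ε : ℝ in 𝓝[>] 0, ε * (c - b) < m' - m := by
    refine nhdsWithin_le_nhds (Tendsto.eventually_lt_const (v := 0) (sub_pos.2 hm') ?_)
    simpa using (continuous_mul_const (c - b)).tendsto (0 : ℝ)
  filter_upwards [self_mem_nhdsWithin, hsmall] with ε (hε : 0 < ε) hεb x hx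
  rcases le_total (g x) c with hxc | hxc
  · have hbx : ε * b ≤ ε * g x :=
      mul_le_mul_of_nonneg_left (hb (mem_image_of_mem g hx)) hε.le
    linarith [hgap x ⟨hx, hxc⟩]
  · gcongr
    exact hm x hx

theorem biInf_coe_ereal_eq_of_isMinOn {a : α} (ha : a ∈ s) (hmin : IsMinOn f s a) :
    ⨅ x ∈ s, (f x : EReal) = f a :=
  le_antisymm (iInf₂_le a ha) (le_iInf₂ fun _ hx => EReal.coe_le_coe (hmin hx))

theorem coe_le_inv_mul_sub_coe_iff {ε m c : ℝ} {v : EReal} (hε : 0 < ε) :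
    (c : EReal) ≤ (ε⁻¹ : ℝ) * (v - m) ↔ ((m + ε * c : ℝ) : EReal) ≤ v := by
  rw [EReal.coe_inv, mul_comm, ← div_eq_mul_inv,
    EReal.le_div_iff_mul_le (EReal.coe_pos.2 hε) (EReal.coe_ne_top ε),
    EReal.le_sub_iff_add_le (.inl (EReal.coe_ne_bot m)) (.inl (EReal.coe_ne_top m))]
  norm_cast
  rw [mul_comm, add_comm]

theorem inv_mul_sub_coe_le_coe_iff {ε m c : ℝ} {v : EReal} (hε : 0 < ε) :
    (ε⁻¹ : ℝ) * (v - m) ≤ (c : EReal) ↔ v ≤ ((m + ε * c : ℝ) : EReal) := by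
  rw [EReal.coe_inv, mul_comm, ← div_eq_mul_inv,
    EReal.div_le_iff_le_mul (EReal.coe_pos.2 hε) (EReal.coe_ne_top ε),
    EReal.sub_le_iff_le_add (.inl (EReal.coe_ne_bot m)) (.inl (EReal.coe_ne_top m))]
  norm_cast
  rw [add_comm]

/-- Danskin's theorem for a minimum. -/
theorem tendsto_inv_mul_biInf_add_mul_sub_biInf [TopologicalSpace α] (hs : IsCompact s)
    (hne : s.Nonempty) (hf : LowerSemicontinuousOn f s) (hg : LowerSemicontinuousOn g s) :
    Tendsto (fun ε : ℝ => ((ε⁻¹ : ℝ) : EReal) *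
        ((⨅ x ∈ s, ((f x + ε * g x : ℝ) : EReal)) - ⨅ x ∈ s, (f x : EReal)))
      (𝓝[>] 0) (𝓝 (⨅ x ∈ {x ∈ s | IsMinOn f s x}, (g x : EReal))) := by
  obtain ⟨x₀, hx₀, hmin₀⟩ := hf.exists_isMinOn hne hs
  have hargmin : {x ∈ s | IsMinOn f s x} = s ∩ f ⁻¹' Iic (f x₀) :=
    Set.ext fun x => and_congr_right fun _ =>
      ⟨fun h => h hx₀, fun h => isMinOn_iff.2 fun _ hy => le_trans h (hmin₀ hy)⟩
  obtain ⟨q, hq, hqmin⟩ : ∃ q ∈ s ∩ f ⁻¹' Iic (f x₀), IsMinOn g (s ∩ f ⁻¹' Iic (f x₀)) q :=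
    (hg.mono inter_subset_left).exists_isMinOn ⟨x₀, hx₀, mem_preimage.2 (mem_Iic.2 le_rfl)⟩
      (hf.isCompact_inter_preimage_Iic hs _)
  rw [hargmin, biInf_coe_ereal_eq_of_isMinOn hx₀ hmin₀, biInf_coe_ereal_eq_of_isMinOn hq hqmin]
  refine tendsto_order.2 ⟨fun a ha => ?_, fun a ha => ?_⟩
  · obtain ⟨c, hac, hcq⟩ := EReal.exists_between_coe_real ha
    have hc : ∀ x ∈ s, f x = f x₀ → c < g x := fun x hx hfx =>
      (EReal.coe_lt_coe_iff.1 hcq).trans_le (hqmin ⟨hx, hfx.le⟩)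
    filter_upwards [self_mem_nhdsWithin,
      eventually_forall_mem_add_mul_le hs hf hg (fun x hx => hmin₀ hx) hc] with ε hε hle
    exact hac.trans_le <| (coe_le_inv_mul_sub_coe_iff hε).2 <|
      le_iInf₂ fun x hx => EReal.coe_le_coe (hle x hx)
  · filter_upwards [self_mem_nhdsWithin] with ε hε
    refine ((inv_mul_sub_coe_le_coe_iff hε).2 ((iInf₂_le q hq.1).trans ?_)).trans_lt ha
    exact EReal.coe_le_coe (add_le_add_left hq.2 _)

theorem tendsto_inv_mul_biInf_add_mul_sub_biInf_of_isCompact_image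
    (hs : IsCompact ((fun x => (f x, g x)) '' s)) (hne : s.Nonempty) :
    Tendsto (fun ε : ℝ => ((ε⁻¹ : ℝ) : EReal) *
        ((⨅ x ∈ s, ((f x + ε * g x : ℝ) : EReal)) - ⨅ x ∈ s, (f x : EReal)))
      (𝓝[>] 0) (𝓝 (⨅ x ∈ {x ∈ s | IsMinOn f s x}, (g x : EReal))) := by
  let _ : TopologicalSpace α := .induced (fun x => (f x, g x)) inferInstance
  have hind : Topology.IsInducing fun x => (f x, g x) := ⟨rfl⟩
  have hf : Continuous f := continuous_fst.comp hind.continuous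
  have hg : Continuous g := continuous_snd.comp hind.continuous
  exact tendsto_inv_mul_biInf_add_mul_sub_biInf (hind.isCompact_iff.2 hs) hne
    (hf.lowerSemicontinuous.lowerSemicontinuousOn s)
    (hg.lowerSemicontinuous.lowerSemicontinuousOn s)

end DirectionalDerivative

section Truncation

variable {P : Measure Ω} {X Z : Ω → ℝ}

theorem measurable_truncation (hX : Measurable X) (A : ℝ) : Measurable (truncation X A) :=
  (measurable_id.indicator measurableSet_Ioc).comp hX

theorem abs_sub_truncation_le_indicator {α : Type*} (f : α → ℝ) {a A : ℝ} (haA : a < A) (x : α) :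
    |f x - truncation f A x| ≤ {y | a < |f y|}.indicator (fun y => |f y|) x := by
  by_cases hx : a < |f x|
  · rw [indicator_of_mem (s := {y | a < |f y|}) hx]
    simp only [truncation, indicator, Function.comp_apply, id]
    split_ifs <;> simp
  · rw [truncation_eq_self ((not_lt.1 hx).trans_lt haA), sub_self, abs_zero]
    exact indicator_nonneg (fun y _ => abs_nonneg (f y)) x

theorem integrable_mul_truncation (hZ : Integrable Z P) (hX : Measurable X) (A : ℝ) :
    Integrable (fun ω => Z ω * truncation X A ω) P :=
  hZ.mul_bdd (measurable_truncation hX A).aestronglyMeasurable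
    (ae_of_all _ (abs_truncation_le_bound X A))

theorem lintegral_enorm_mul_sub_truncation_le (hZ : 0 ≤ᵐ[P] Z) (hX : Measurable X) {a A : ℝ}
    (haA : a < A) :
    ∫⁻ ω, ‖Z ω * X ω - Z ω * truncation X A ω‖ₑ ∂P ≤
      ∫⁻ ω in {ω | a < |X ω|}, ENNReal.ofReal (Z ω * |X ω|) ∂P := by
  rw [← lintegral_indicator (measurableSet_lt measurable_const hX.abs)]
  refine lintegral_mono_ae (hZ.mono fun ω (hω : 0 ≤ Z ω) => ?_)
  rw [← mul_sub, Real.enorm_eq_ofReal_abs, abs_mul, abs_of_nonneg hω]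
  refine (ENNReal.ofReal_le_ofReal
    (mul_le_mul_of_nonneg_left (abs_sub_truncation_le_indicator X haA ω) hω)).trans_eq ?_
  by_cases h : a < |X ω| <;> simp [h]

end Truncation

/-- Weak convergence `Zₖ → W` in `σ(L¹(P), L^∞(P))`. As in `WSeqCompact`, the test functions are the
measurable functions that are bounded everywhere. -/
def WeakTendsto (P : Measure Ω) (Z : ℕ → Ω → ℝ) (W : Ω → ℝ) : Prop :=
  ∀ g : Ω → ℝ, Measurable g → (∃ C : ℝ, ∀ ω, |g ω| ≤ C) →
    Tendsto (fun k => ∫ ω, Z k ω * g ω ∂P) atTop (𝓝 (∫ ω, W ω * g ω ∂P))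

section StrongL1

variable {P : Measure Ω} {D : Set (Ω → ℝ)} {X Y Z W : Ω → ℝ}

-- `truncation X A` also vanishes where `X = -A`, so truncating at `n` itself would change `X`
-- outside of `{n < |X|}`.
theorem lintegral_enorm_mul_sub_truncation_le_tailSup (hX : Measurable X) (hZ : Z ∈ D)
    (hZ0 : 0 ≤ᵐ[P] Z) (n : ℕ) :
    ∫⁻ ω, ‖Z ω * X ω - Z ω * truncation X (n + 1) ω‖ₑ ∂P ≤ tailSup P D X n :=
  (lintegral_enorm_mul_sub_truncation_le hZ0 hX (lt_add_one (n : ℝ))).trans <|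
    le_iSup₂ (f := fun Z (_ : Z ∈ D) =>
      ∫⁻ ω in {ω | (n : ℝ) < |X ω|}, ENNReal.ofReal (Z ω * |X ω|) ∂P) Z hZ

theorem integrable_mul_of_mem_ls (hX : X ∈ Ls P D) (hZ : Z ∈ D) (hZint : Integrable Z P)
    (hZ0 : 0 ≤ᵐ[P] Z) : Integrable (fun ω => Z ω * X ω) P := by
  obtain ⟨n, hn⟩ := (hX.2.eventually_lt_const ENNReal.zero_lt_top).exists
  have htrunc := integrable_mul_truncation hZint hX.1 (n + 1)
  have hdiff : Integrable (fun ω => Z ω * X ω - Z ω * truncation X (n + 1) ω) P :=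
    ⟨(hZint.1.mul hX.1.aestronglyMeasurable).sub htrunc.1,
      (lintegral_enorm_mul_sub_truncation_le_tailSup hX.1 hZ hZ0 n).trans_lt hn⟩
  simpa only [Pi.add_def, sub_add_cancel] using hdiff.add htrunc

theorem tendstoUniformlyOn_integral_mul_truncation
    (hD : ∀ Z ∈ D, Integrable Z P ∧ 0 ≤ᵐ[P] Z) (hX : X ∈ Ls P D) :
    TendstoUniformlyOn (fun (n : ℕ) Z => ∫ ω, Z ω * truncation X (n + 1) ω ∂P)
      (fun Z => ∫ ω, Z ω * X ω ∂P) atTop D := by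
  rw [EMetric.tendstoUniformlyOn_iff]
  intro δ hδ
  filter_upwards [hX.2.eventually_lt_const hδ] with n hn Z hZ
  obtain ⟨hZint, hZ0⟩ := hD Z hZ
  calc edist (∫ ω, Z ω * X ω ∂P) (∫ ω, Z ω * truncation X (n + 1) ω ∂P)
      = ‖∫ ω, (Z ω * X ω - Z ω * truncation X (n + 1) ω) ∂P‖ₑ := by
        rw [edist_eq_enorm_sub, integral_sub (integrable_mul_of_mem_ls hX hZ hZint hZ0)
          (integrable_mul_truncation hZint hX.1 (n + 1))]
    _ ≤ ∫⁻ ω, ‖Z ω * X ω - Z ω * truncation X (n + 1) ω‖ₑ ∂P :=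
        enorm_integral_le_lintegral_enorm _
    _ ≤ tailSup P D X n := lintegral_enorm_mul_sub_truncation_le_tailSup hX.1 hZ hZ0 n
    _ < δ := hn

theorem WeakTendsto.tendsto_integral_mul {Z : ℕ → Ω → ℝ} (h : WeakTendsto P Z W)
    (hD : ∀ Z ∈ D, Integrable Z P ∧ 0 ≤ᵐ[P] Z) (hX : X ∈ Ls P D) (hZ : ∀ k, Z k ∈ D)
    (hW : W ∈ D) :
    Tendsto (fun k => ∫ ω, Z k ω * X ω ∂P) atTop (𝓝 (∫ ω, W ω * X ω ∂P)) := by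
  have hunif := tendstoUniformlyOn_integral_mul_truncation hD hX
  have hseq : TendstoUniformly (fun (n : ℕ) k => ∫ ω, Z k ω * truncation X (n + 1) ω ∂P)
      (fun k => ∫ ω, Z k ω * X ω ∂P) atTop :=
    tendstoUniformlyOn_univ.1 ((hunif.comp Z).mono fun k _ => hZ k)
  exact hseq.tendsto_of_eventually_tendsto
    (Eventually.of_forall fun n => h _ (measurable_truncation hX.1 (n + 1))
      ⟨_, abs_truncation_le_bound X (n + 1)⟩)
    (hunif.tendsto_at hW)

theorem WSeqCompact.isCompact_image_integral_mul (hcomp : WSeqCompact P D)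
    (hD : ∀ Z ∈ D, Integrable Z P ∧ 0 ≤ᵐ[P] Z) (hX : X ∈ Ls P D) (hY : Y ∈ Ls P D) :
    IsCompact ((fun Z => (∫ ω, Z ω * X ω ∂P, ∫ ω, Z ω * Y ω ∂P)) '' D) := by
  refine IsSeqCompact.isCompact fun x hx => ?_
  choose Z hZ hZx using hx
  obtain ⟨W, hW, φ, hφ, hlim⟩ := hcomp Z hZ
  have hweak : WeakTendsto P (fun k => Z (φ k)) W := hlim
  refine ⟨_, mem_image_of_mem _ hW, φ, hφ, ?_⟩
  rw [← funext hZx]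
  exact (hweak.tendsto_integral_mul hD hX (fun k => hZ (φ k)) hW).prodMk_nhds
    (hweak.tendsto_integral_mul hD hY (fun k => hZ (φ k)) hW)

end StrongL1

section Expectation

variable {P : Measure Ω} {D : Set (Ω → ℝ)} {X Y Z : Ω → ℝ}

theorem eexp_eq_integral_mul (h : Integrable (fun ω => Z ω * X ω) P) :
    eexp P Z X = ((∫ ω, Z ω * X ω ∂P : ℝ) : EReal) := by
  have hpos : ∫⁻ ω, ENNReal.ofReal (Z ω * X ω) ∂P ≠ ⊤ := h.lintegral_lt_top.ne
  have hneg : ∫⁻ ω, ENNReal.ofReal (-(Z ω * X ω)) ∂P ≠ ⊤ := h.neg.lintegral_lt_top.ne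
  rw [eexp, if_neg hneg, integral_eq_lintegral_pos_part_sub_lintegral_neg_part h, EReal.coe_sub,
    EReal.coe_ennreal_toReal hpos, EReal.coe_ennreal_toReal hneg]

theorem eexp_add_const_mul (hY : Integrable (fun ω => Z ω * Y ω) P)
    (hX : Integrable (fun ω => Z ω * X ω) P) (ε : ℝ) :
    eexp P Z (fun ω => Y ω + ε * X ω) =
      ((∫ ω, Z ω * Y ω ∂P + ε * ∫ ω, Z ω * X ω ∂P : ℝ) : EReal) := by
  have hmul : (fun ω => Z ω * (Y ω + ε * X ω)) = fun ω => Z ω * Y ω + ε * (Z ω * X ω) := by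
    ext ω
    ring
  have hint : Integrable (fun ω => Z ω * (Y ω + ε * X ω)) P := hmul ▸ hY.add (hX.const_mul ε)
  rw [eexp_eq_integral_mul hint, hmul, integral_add hY (hX.const_mul ε), integral_const_mul]

theorem cohU_eq_biInf_integral_mul (hX : ∀ Z ∈ D, Integrable (fun ω => Z ω * X ω) P) :
    cohU P D X = ⨅ Z ∈ D, ((∫ ω, Z ω * X ω ∂P : ℝ) : EReal) :=
  biInf_congr fun Z hZ => eexp_eq_integral_mul (hX Z hZ)

theorem extSet_eq_sep_isMinOn (hY : ∀ Z ∈ D, Integrable (fun ω => Z ω * Y ω) P) :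
    ExtSet P D Y = {Z ∈ D | IsMinOn (fun Z => ∫ ω, Z ω * Y ω ∂P) D Z} := by
  ext Z
  constructor
  · rintro ⟨hZ, hZY, -⟩
    refine ⟨hZ, fun W hW => EReal.coe_le_coe_iff.1 ?_⟩
    rw [← eexp_eq_integral_mul (hY Z hZ), ← eexp_eq_integral_mul (hY W hW), hZY]
    exact iInf₂_le W hW
  · rintro ⟨hZ, hmin⟩
    have hu : cohU P D Y = ((∫ ω, Z ω * Y ω ∂P : ℝ) : EReal) :=
      (cohU_eq_biInf_integral_mul hY).trans (biInf_coe_ereal_eq_of_isMinOn hZ hmin)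
    exact ⟨hZ, (eexp_eq_integral_mul (hY Z hZ)).trans hu.symm, hu ▸ EReal.bot_lt_coe _,
      hu ▸ EReal.coe_lt_top _⟩

theorem integrable_of_mem_dens (hZ : Z ∈ Dens P) : Integrable Z P := by
  refine ⟨hZ.1.aestronglyMeasurable, ?_⟩
  rw [hasFiniteIntegral_iff_ofReal (ae_of_all _ hZ.2.1), hZ.2.2]
  exact ENNReal.one_lt_top

end Expectation

theorem stmt_10_general {P : Measure Ω} {D : Set (Ω → ℝ)}
    (hD : ∀ Z ∈ D, Integrable Z P ∧ 0 ≤ᵐ[P] Z) (hDne : D.Nonempty) (hDcomp : WSeqCompact P D)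
    {X Y : Ω → ℝ} (hX : X ∈ Ls P D) (hY : Y ∈ Ls P D) :
    Tendsto (fun ε : ℝ =>
        ((ε⁻¹ : ℝ) : EReal) * (cohU P D (fun ω => Y ω + ε * X ω) - cohU P D Y))
      (𝓝[>] 0) (𝓝 (⨅ Z ∈ ExtSet P D Y, eexp P Z X)) := by
  have hXint : ∀ Z ∈ D, Integrable (fun ω => Z ω * X ω) P := fun Z hZ =>
    integrable_mul_of_mem_ls hX hZ (hD Z hZ).1 (hD Z hZ).2
  have hYint : ∀ Z ∈ D, Integrable (fun ω => Z ω * Y ω) P := fun Z hZ =>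
    integrable_mul_of_mem_ls hY hZ (hD Z hZ).1 (hD Z hZ).2
  have hu : ∀ ε : ℝ, cohU P D (fun ω => Y ω + ε * X ω) =
      ⨅ Z ∈ D, ((∫ ω, Z ω * Y ω ∂P + ε * ∫ ω, Z ω * X ω ∂P : ℝ) : EReal) := fun ε =>
    biInf_congr fun Z hZ => eexp_add_const_mul (hYint Z hZ) (hXint Z hZ) ε
  have hcontrib : ⨅ Z ∈ ExtSet P D Y, eexp P Z X =
      ⨅ Z ∈ ExtSet P D Y, ((∫ ω, Z ω * X ω ∂P : ℝ) : EReal) :=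
    biInf_congr fun Z hZ => eexp_eq_integral_mul (hXint Z hZ.1)
  rw [hcontrib, extSet_eq_sep_isMinOn hYint, cohU_eq_biInf_integral_mul hYint]
  simp only [hu]
  exact tendsto_inv_mul_biInf_add_mul_sub_biInf_of_isCompact_image
    (hDcomp.isCompact_image_integral_mul hD hY hX) hDne

/-- If `D` is weakly compact and `X, Y ∈ L¹_s(D)`, then the utility
contribution `u^c(X;Y) = inf_{Q ∈ 𝒳_D(Y)} E_Q[X]` equals the one-sided directional
derivative `lim_{ε↓0} ε⁻¹ (u(Y + εX) − u(Y))`. -/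
theorem stmt_10 (P : Measure Ω) [IsProbabilityMeasure P] (D : Set (Ω → ℝ))
    (hDsub : D ⊆ Dens P) (hDne : D.Nonempty) (hDcomp : WSeqCompact P D)
    (X Y : Ω → ℝ) (hX : X ∈ Ls P D) (hY : Y ∈ Ls P D) :
    Tendsto (fun ε : ℝ =>
        ((ε⁻¹ : ℝ) : EReal) * (cohU P D (fun ω => Y ω + ε * X ω) - cohU P D Y))
      (nhdsWithin 0 (Set.Ioi 0)) (nhds (⨅ Z ∈ ExtSet P D Y, eexp P Z X)) := by
  exact stmt_10_general (fun Z hZ => ⟨integrable_of_mem_dens (hDsub hZ),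
    ae_of_all _ (hDsub hZ).2.1⟩) hDne hDcomp hX hY
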